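/- arXiv:1408.1742 — 3 statements merged into one kernel-verified Lean document; each statement's English description precedes it below -/
import Mathlib

section
/- For every dimension s ≥ 1 and every δ ∈ (0,1], there exists a finite set Γ of points in [0,1]^s with cardinality |Γ| ≤ (2e)^s (δ^{-1}+1)^s such that for every t ∈ [0,1]^s there exist x, y ∈ Γ with [0,x] ⊆ [0,t] ⊆ [0,y] and λ([0,y] \ [0,x]) ≤ δ, where λ denotes Lebesgue measure. (In other words, the anchored boxes {[0,x] : x ∈ Γ} form a δ-cover of the family of all anchored boxes [0,t] ⊆ [0,1]^s.) -/
open MeasureTheory Set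

/-!
A bracketing cover is built by induction on the dimension. Cut `[0,1]^(s+1)` along the first
coordinate into `n` slabs and bracket the remaining coordinates in the `k`-th slab, with precision
`δ k`. If `X ≤ Y` are the volumes of the boxes of such a bracket, the lifted bracket has width
`((k + 1) * Y - k * X) / n = ((k + 1) * (Y - X) + X) / n ≤ ((k + 1) * δ k + 1) / n`, so slabs near
the origin may be subdivided coarsely: `δ k = s / (k + 1)` gives width `(s + 1) / n`. The numbers
of brackets then satisfy the hockey-stick identity, and the `s`-dimensional family of width
`s / (j + 1)` has at most `(j + s).choose s` members. Choosing `j = ⌊s / δ⌋₊` and collecting the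
corners of the brackets gives the cover.
-/

section Volume

variable {ι : Type*} [Fintype ι] {x y : ι → ℝ}

lemma volume_Icc_zero_pi (hx : 0 ≤ x) : volume (Icc 0 x) = ENNReal.ofReal (∏ i, x i) := by
  simp [Real.volume_Icc_pi, ENNReal.ofReal_prod_of_nonneg fun i _ => hx i]

lemma volume_Icc_zero_diff_Icc_zero_pi (hx : 0 ≤ x) (hxy : x ≤ y) :
    volume (Icc 0 y \ Icc 0 x) = ENNReal.ofReal (∏ i, y i - ∏ i, x i) := by
  rw [measure_sdiff (Icc_subset_Icc_right hxy) measurableSet_Icc.nullMeasurableSet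
      isCompact_Icc.measure_ne_top,
    volume_Icc_zero_pi hx, volume_Icc_zero_pi (hx.trans hxy),
    ENNReal.ofReal_sub _ (Finset.prod_nonneg fun i _ => hx i)]

end Volume

section Covers

variable {ι : Type*} [Fintype ι] {δ ε : ℝ}

/-- A finite set `Γ ⊆ [0,1]^ι` is a `δ`-cover if the anchored boxes `[0,x]`, `x ∈ Γ`, form a
`δ`-cover of the family of all anchored boxes in `[0,1]^ι`. -/
structure IsDeltaCover (δ : ℝ) (Γ : Finset (ι → ℝ)) : Prop where
  mem_Icc : ∀ x ∈ Γ, x ∈ Icc (0 : ι → ℝ) 1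
  exists_subset_subset : ∀ t ∈ Icc (0 : ι → ℝ) 1, ∃ x ∈ Γ, ∃ y ∈ Γ,
    Icc 0 x ⊆ Icc 0 t ∧ Icc 0 t ⊆ Icc 0 y ∧ volume (Icc 0 y \ Icc 0 x) ≤ ENNReal.ofReal δ

/-- A `δ`-bracketing cover of the anchored boxes in `[0,1]^ι`. A pair `(x, y) ∈ B` encodes the
bracket of all boxes between `[0,x]` and `[0,y]`; its width, the difference of the two volumes, is
written as a difference of products. -/
structure IsBracketingCover (δ : ℝ) (B : Finset ((ι → ℝ) × (ι → ℝ))) : Prop where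
  zero_le : ∀ p ∈ B, 0 ≤ p.1
  fst_le_snd : ∀ p ∈ B, p.1 ≤ p.2
  le_one : ∀ p ∈ B, p.2 ≤ 1
  width_le : ∀ p ∈ B, ∏ i, p.2 i - ∏ i, p.1 i ≤ δ
  exists_mem : ∀ t ∈ Icc (0 : ι → ℝ) 1, ∃ p ∈ B, t ∈ Icc p.1 p.2

/-- The lower and upper corners of a family of brackets. -/
noncomputable def bracketCorners (B : Finset ((ι → ℝ) × (ι → ℝ))) : Finset (ι → ℝ) :=
  B.image Prod.fst ∪ B.image Prod.snd

lemma card_bracketCorners_le (B : Finset ((ι → ℝ) × (ι → ℝ))) :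
    (bracketCorners B).card ≤ 2 * B.card := by
  rw [two_mul]
  exact (Finset.card_union_le _ _).trans
    (add_le_add Finset.card_image_le Finset.card_image_le)

namespace IsBracketingCover

variable {B : Finset ((ι → ℝ) × (ι → ℝ))}

lemma mono (hB : IsBracketingCover δ B) (h : δ ≤ ε) : IsBracketingCover ε B :=
  { hB with width_le := fun p hp => (hB.width_le p hp).trans h }

lemma isDeltaCover_bracketCorners (hB : IsBracketingCover δ B) :
    IsDeltaCover δ (bracketCorners B) where
  mem_Icc x hx := by
    rcases Finset.mem_union.1 hx with hx | hx <;> obtain ⟨p, hp, rfl⟩ := Finset.mem_image.1 hx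
    · exact ⟨hB.zero_le p hp, (hB.fst_le_snd p hp).trans (hB.le_one p hp)⟩
    · exact ⟨(hB.zero_le p hp).trans (hB.fst_le_snd p hp), hB.le_one p hp⟩
  exists_subset_subset t ht := by
    obtain ⟨p, hp, hpt, htp⟩ := hB.exists_mem t ht
    refine ⟨p.1, Finset.mem_union_left _ (Finset.mem_image_of_mem _ hp),
      p.2, Finset.mem_union_right _ (Finset.mem_image_of_mem _ hp),
      Icc_subset_Icc_right hpt, Icc_subset_Icc_right htp, ?_⟩
    rw [volume_Icc_zero_diff_Icc_zero_pi (hB.zero_le p hp) (hB.fst_le_snd p hp)]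
    exact ENNReal.ofReal_le_ofReal (hB.width_le p hp)

end IsBracketingCover

end Covers

section Slabs

variable {s n k : ℕ}

lemma exists_nat_div_le_le_succ_div (hn : n ≠ 0) {x : ℝ} (hx : x ∈ Icc (0 : ℝ) 1) :
    ∃ k < n, (k : ℝ) / n ≤ x ∧ x ≤ (k + 1) / n := by
  have hn' : (0 : ℝ) < n := by positivity
  simp only [div_le_iff₀ hn', le_div_iff₀ hn']
  obtain rfl | hx1 := hx.2.eq_or_lt
  · obtain ⟨m, rfl⟩ := Nat.exists_eq_succ_of_ne_zero hn
    exact ⟨m, m.lt_succ_self, by simp⟩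
  · have hxn : 0 ≤ x * n := mul_nonneg hx.1 hn'.le
    exact ⟨⌊x * n⌋₊, (Nat.floor_lt hxn).2 (mul_lt_of_lt_one_left hn' hx1),
      Nat.floor_le hxn, (Nat.lt_floor_add_one _).le⟩

/-- The bracket `p`, lifted to one more dimension by adding the interval `[k / n, (k + 1) / n]` as
first coordinate. -/
noncomputable def slabBracket (n k : ℕ) (p : (Fin s → ℝ) × (Fin s → ℝ)) :
    (Fin (s + 1) → ℝ) × (Fin (s + 1) → ℝ) :=
  (Fin.cons (k / n : ℝ) p.1, Fin.cons ((k + 1) / n : ℝ) p.2)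

lemma slabBracket_width_le {δ : ℝ} {p : (Fin s → ℝ) × (Fin s → ℝ)}
    (hp : ∏ i, p.1 i ≤ 1) (hδ : ∏ i, p.2 i - ∏ i, p.1 i ≤ δ) :
    ∏ i, (slabBracket n k p).2 i - ∏ i, (slabBracket n k p).1 i ≤ ((k + 1) * δ + 1) / n := by
  simp only [slabBracket, Fin.prod_univ_succ, Fin.cons_zero, Fin.cons_succ]
  calc ((k : ℝ) + 1) / n * ∏ i, p.2 i - k / n * ∏ i, p.1 i
      = ((k + 1) * (∏ i, p.2 i - ∏ i, p.1 i) + ∏ i, p.1 i) / n := by ring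
    _ ≤ ((k + 1) * δ + 1) / n := by gcongr

/-- The cover of `[0,1]^(s+1)` by `n` slabs orthogonal to the first axis, the `k`-th of which is
subdivided by the brackets in `B k`. -/
noncomputable def slabBrackets (n : ℕ) (B : ℕ → Finset ((Fin s → ℝ) × (Fin s → ℝ))) :
    Finset ((Fin (s + 1) → ℝ) × (Fin (s + 1) → ℝ)) :=
  (Finset.range n).biUnion fun k => (B k).image (slabBracket n k)

variable {B : ℕ → Finset ((Fin s → ℝ) × (Fin s → ℝ))}

lemma mem_slabBrackets {q : (Fin (s + 1) → ℝ) × (Fin (s + 1) → ℝ)} :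
    q ∈ slabBrackets n B ↔ ∃ k < n, ∃ p ∈ B k, slabBracket n k p = q := by
  simp [slabBrackets]

lemma card_slabBrackets_le (n : ℕ) (B : ℕ → Finset ((Fin s → ℝ) × (Fin s → ℝ))) :
    (slabBrackets n B).card ≤ ∑ k ∈ Finset.range n, (B k).card :=
  Finset.card_biUnion_le.trans (Finset.sum_le_sum fun _ _ => Finset.card_image_le)

lemma isBracketingCover_slabBrackets {δ : ℕ → ℝ} {ε : ℝ} (hn : n ≠ 0)
    (hB : ∀ k < n, IsBracketingCover (δ k) (B k))
    (hε : ∀ k < n, ((k + 1) * δ k + 1) / n ≤ ε) :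
    IsBracketingCover ε (slabBrackets n B) where
  zero_le q hq := by
    obtain ⟨k, hk, p, hp, rfl⟩ := mem_slabBrackets.1 hq
    exact (Fin.le_cons (α := fun _ => ℝ)).2
      ⟨div_nonneg k.cast_nonneg n.cast_nonneg, (hB k hk).zero_le p hp⟩
  fst_le_snd q hq := by
    obtain ⟨k, hk, p, hp, rfl⟩ := mem_slabBrackets.1 hq
    exact (Fin.cons_le_cons (α := fun _ => ℝ)).2
      ⟨div_le_div_of_nonneg_right (lt_add_one _).le n.cast_nonneg, (hB k hk).fst_le_snd p hp⟩
  le_one q hq := by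
    obtain ⟨k, hk, p, hp, rfl⟩ := mem_slabBrackets.1 hq
    exact (Fin.cons_le (α := fun _ => ℝ)).2
      ⟨div_le_one_of_le₀ (by exact_mod_cast hk) n.cast_nonneg, (hB k hk).le_one p hp⟩
  width_le q hq := by
    obtain ⟨k, hk, p, hp, rfl⟩ := mem_slabBrackets.1 hq
    have lower_le_one : ∏ i, p.1 i ≤ 1 := Finset.prod_le_one
      (fun i _ => (hB k hk).zero_le p hp i)
      (fun i _ => ((hB k hk).fst_le_snd p hp i).trans ((hB k hk).le_one p hp i))
    exact (slabBracket_width_le lower_le_one ((hB k hk).width_le p hp)).trans (hε k hk)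
  exists_mem t ht := by
    obtain ⟨k, hk, hkt, htk⟩ := exists_nat_div_le_le_succ_div hn ⟨ht.1 0, ht.2 0⟩
    obtain ⟨p, hp, hpt, htp⟩ := (hB k hk).exists_mem (Fin.tail t)
      ⟨fun i => ht.1 i.succ, fun i => ht.2 i.succ⟩
    exact ⟨slabBracket n k p, mem_slabBrackets.2 ⟨k, hk, p, hp, rfl⟩,
      (Fin.cons_le (α := fun _ => ℝ)).2 ⟨hkt, hpt⟩, (Fin.le_cons (α := fun _ => ℝ)).2 ⟨htk, htp⟩⟩

end Slabs

/-- The bracketing cover of `[0,1]^s` of width `s / (j + 1)`: in every dimension the first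
coordinate is cut into `j + 1` slabs, and the `k`-th slab carries the family with parameter `k` in
the remaining coordinates. -/
noncomputable def nestedBrackets : (s : ℕ) → ℕ → Finset ((Fin s → ℝ) × (Fin s → ℝ))
  | 0, _ => {(0, 0)}
  | s + 1, j => slabBrackets (j + 1) (nestedBrackets s)

lemma card_nestedBrackets_le (s j : ℕ) : (nestedBrackets s j).card ≤ (j + s).choose s := by
  induction s generalizing j with
  | zero => simp [nestedBrackets]
  | succ s ih =>
    calc (nestedBrackets (s + 1) j).card
        ≤ ∑ k ∈ Finset.range (j + 1), (nestedBrackets s k).card := card_slabBrackets_le _ _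
      _ ≤ ∑ k ∈ Finset.range (j + 1), (k + s).choose s := Finset.sum_le_sum fun k _ => ih k
      _ = (j + (s + 1)).choose (s + 1) := Nat.sum_range_add_choose j s

lemma isBracketingCover_nestedBrackets (s j : ℕ) :
    IsBracketingCover (s / (j + 1) : ℝ) (nestedBrackets s j) := by
  induction s generalizing j with
  | zero => constructor <;> simp [nestedBrackets]
  | succ s ih =>
    refine isBracketingCover_slabBrackets j.succ_ne_zero (fun k _ => ih k) fun k _ => le_of_eq ?_
    push_cast
    field_simp

lemma choose_le_exp_one_mul_div_pow (n k : ℕ) :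
    (n.choose k : ℝ) ≤ (Real.exp 1 * (n / k)) ^ k := by
  obtain rfl | hk := eq_or_ne k 0
  · simp
  calc (n.choose k : ℝ) ≤ n ^ k / k.factorial := Nat.choose_le_pow_div k n
    _ = k ^ k / k.factorial * (n / k) ^ k := by rw [div_pow]; field_simp
    _ ≤ Real.exp k * (n / k) ^ k := by
      gcongr
      exact Real.pow_div_factorial_le_exp _ k.cast_nonneg k
    _ = (Real.exp 1 * (n / k)) ^ k := by rw [mul_pow, Real.exp_one_pow]

theorem exists_isBracketingCover_card_le (s : ℕ) {δ : ℝ} (hδ : 0 < δ) :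
    ∃ B : Finset ((Fin s → ℝ) × (Fin s → ℝ)), IsBracketingCover δ B ∧
      (B.card : ℝ) ≤ (Real.exp 1 * (δ⁻¹ + 1)) ^ s := by
  set j := ⌊s / δ⌋₊
  have width_le : (s : ℝ) / (j + 1) ≤ δ :=
    (div_le_comm₀ hδ (by positivity)).1 (Nat.lt_floor_add_one _).le
  have ratio_le : ((j + s : ℕ) : ℝ) / s ≤ δ⁻¹ + 1 := by
    refine div_le_of_le_mul₀ s.cast_nonneg (by positivity) ?_
    calc ((j + s : ℕ) : ℝ) ≤ s / δ + s := by
          push_cast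
          gcongr
          exact Nat.floor_le (by positivity)
      _ = (δ⁻¹ + 1) * s := by ring
  refine ⟨nestedBrackets s j, (isBracketingCover_nestedBrackets s j).mono width_le, ?_⟩
  calc ((nestedBrackets s j).card : ℝ)
      ≤ (j + s).choose s := by exact_mod_cast card_nestedBrackets_le s j
    _ ≤ (Real.exp 1 * ((j + s : ℕ) / s)) ^ s := choose_le_exp_one_mul_div_pow _ s
    _ ≤ (Real.exp 1 * (δ⁻¹ + 1)) ^ s := by gcongr

theorem delta_cover_of_anchored_boxes_general (s : ℕ) {δ : ℝ} (hδ : 0 < δ) :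
    ∃ Γ : Finset (Fin s → ℝ), IsDeltaCover δ Γ ∧
      (Γ.card : ℝ) ≤ 2 * (Real.exp 1 * (δ⁻¹ + 1)) ^ s := by
  obtain ⟨B, hB, hcard⟩ := exists_isBracketingCover_card_le s hδ
  refine ⟨bracketCorners B, hB.isDeltaCover_bracketCorners, ?_⟩
  calc ((bracketCorners B).card : ℝ) ≤ 2 * B.card := by exact_mod_cast card_bracketCorners_le B
    _ ≤ 2 * (Real.exp 1 * (δ⁻¹ + 1)) ^ s := by gcongr

/-- **δ-cover of anchored boxes.** For every dimension `s ≥ 1` and every `δ ∈ (0,1]` there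
exists a finite set `Γ` of points of `[0,1]^s` with `|Γ| ≤ (2e)^s (δ⁻¹+1)^s` such that for
every `t ∈ [0,1]^s` there are `x, y ∈ Γ` with `[0,x] ⊆ [0,t] ⊆ [0,y]` and
`λ([0,y] \ [0,x]) ≤ δ`. -/
theorem delta_cover_of_anchored_boxes (s : ℕ) (hs : 1 ≤ s) (δ : ℝ) (hδ : δ ∈ Set.Ioc (0:ℝ) 1) :
    ∃ Γ : Finset (Fin s → ℝ),
      (∀ x ∈ Γ, x ∈ Icc (0 : Fin s → ℝ) 1) ∧
      (Γ.card : ℝ) ≤ (2 * Real.exp 1) ^ s * (δ⁻¹ + 1) ^ s ∧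
      ∀ t ∈ Icc (0 : Fin s → ℝ) 1, ∃ x ∈ Γ, ∃ y ∈ Γ,
        Icc (0 : Fin s → ℝ) x ⊆ Icc (0 : Fin s → ℝ) t ∧
        Icc (0 : Fin s → ℝ) t ⊆ Icc (0 : Fin s → ℝ) y ∧
        volume (Icc (0 : Fin s → ℝ) y \ Icc (0 : Fin s → ℝ) x) ≤ ENNReal.ofReal δ := by
  obtain ⟨Γ, hΓ, hcard⟩ := delta_cover_of_anchored_boxes_general s hδ.1
  refine ⟨Γ, hΓ.mem_Icc, hcard.trans ?_, hΓ.exists_subset_subset⟩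
  have hδ_inv : 0 ≤ δ⁻¹ := inv_nonneg.2 hδ.1.le
  rw [← mul_pow, mul_assoc, mul_pow 2]
  gcongr
  exact le_self_pow₀ one_le_two (Nat.one_le_iff_ne_zero.1 hs)
end

section
/- Let s ≥ 2, let ψ : [0,1]^{s-1} → ℝ≥0 be measurable with ψ(z) ≤ L for all z ∈ [0,1]^{s-1}, where 0 < L < ∞. Set A = {z ∈ [0,1]^s : ψ(z_1,…,z_{s-1}) ≥ L z_s} and, for t ∈ [0,1]^{s-1}, J_t* = ([0,t) × [0,1]) ∩ A, where [0,t) = ∏_{j=1}^{s-1} [0,t_j). Then for every δ > 0 there exists a finite family Γ_δ of measurable subsets of A with |Γ_δ| ≤ (2e)^{s-1}(δ^{-1}+1)^{s-1} such that for every t ∈ [0,1]^{s-1} there exist B_1, B_2 ∈ Γ_δ with B_1 ⊆ J_t* ⊆ B_2 and λ(B_2 \ B_1) ≤ δ, where λ is Lebesgue measure. -/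
open MeasureTheory Set

/-- The half-open anchored box `[0,t) = ∏_j [0, t_j)` in `[0,1]^d`. -/
def lowerBox {d : ℕ} (t : Fin d → ℝ) : Set (Fin d → ℝ) :=
  {y | ∀ i, 0 ≤ y i ∧ y i < t i}

/-- The region `A = {z ∈ [0,1]^s : ψ(z_1,…,z_{s-1}) ≥ L z_s}` below the graph of `ψ/L`,
where the first `s-1 = d` coordinates are modelled by `Fin d → ℝ` and the last one by `ℝ`. -/
def graphRegion {d : ℕ} (ψ : (Fin d → ℝ) → ℝ) (L : ℝ) : Set ((Fin d → ℝ) × ℝ) :=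
  {z | z.1 ∈ Icc (0 : Fin d → ℝ) 1 ∧ z.2 ∈ Icc (0 : ℝ) 1 ∧ L * z.2 ≤ ψ z.1}

/-- The test set `J_t* = ([0,t) × [0,1]) ∩ A`. -/
def Jstar {d : ℕ} (ψ : (Fin d → ℝ) → ℝ) (L : ℝ) (t : Fin d → ℝ) : Set ((Fin d → ℝ) × ℝ) :=
  (lowerBox t ×ˢ Icc (0 : ℝ) 1) ∩ graphRegion ψ L

/-!
Membership in `[0,t)` depends only on the first `d` coordinates, so intersecting with `A` turns a
`δ`-cover of `[0,1]^d` in the sense of bracketing (points `x ≤ t ≤ y` with `∏ y - ∏ x ≤ δ`) into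
a `δ`-cover of the test sets.

Brackets of gap at most `d / (k + 1)` are built by induction on `d`. In dimension `d + 1`, cut the
first coordinate into `k + 1` strips of width `1 / (k + 1)`. In the strip starting at
`j / (k + 1)` the width adds at most `1 / (k + 1)` to the gap, while the gap in the remaining `d`
coordinates is damped by the factor `j / (k + 1)`, so it may be as large as `d / (j + 1)`. The
hockey-stick identity then counts at most `(k + d).choose d` brackets in dimension `d`, and
`d ^ d / d! ≤ e ^ d` gives the stated bound for `k = ⌊d / δ⌋`.
-/

open scoped Classical in
/-- A finite set of brackets `(x, y)`, standing for the boxes `[x, y]`, that covers `[0,1]^d` with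
`∏ y - ∏ x ≤ d / (k + 1)`. The first coordinate is cut into `k + 1` strips (not `k`), so that the
parameter `j = 0` of the lowest strip is admissible in the recursion. -/
noncomputable def stripBrackets : (d : ℕ) → ℕ → Finset ((Fin d → ℝ) × (Fin d → ℝ))
  | 0, _ => {(0, 0)}
  | d + 1, k => (Finset.range (k + 1)).biUnion fun j => (stripBrackets d j).image fun c =>
      (Fin.cons ((j : ℝ) / (k + 1)) c.1, Fin.cons (((j : ℝ) + 1) / (k + 1)) c.2)

lemma mem_stripBrackets_succ {d k : ℕ} {c : (Fin (d + 1) → ℝ) × (Fin (d + 1) → ℝ)} :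
    c ∈ stripBrackets (d + 1) k ↔ ∃ j ≤ k, ∃ b ∈ stripBrackets d j,
      (Fin.cons ((j : ℝ) / (k + 1)) b.1, Fin.cons (((j : ℝ) + 1) / (k + 1)) b.2) = c := by
  simp only [stripBrackets, Finset.mem_biUnion, Finset.mem_range, Nat.lt_succ_iff,
    Finset.mem_image]

lemma card_stripBrackets_le (d k : ℕ) : (stripBrackets d k).card ≤ (k + d).choose d := by
  induction d generalizing k with
  | zero => simp [stripBrackets]
  | succ d ih =>
    calc (stripBrackets (d + 1) k).card
        ≤ ∑ j ∈ Finset.range (k + 1), (stripBrackets d j).card :=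
          Finset.card_biUnion_le.trans (Finset.sum_le_sum fun _ _ => Finset.card_image_le)
      _ ≤ ∑ j ∈ Finset.range (k + 1), (j + d).choose d := Finset.sum_le_sum fun j _ => ih j
      _ = (k + (d + 1)).choose (d + 1) := Nat.sum_range_add_choose k d

lemma bounds_of_mem_stripBrackets {d k : ℕ} {c : (Fin d → ℝ) × (Fin d → ℝ)}
    (hc : c ∈ stripBrackets d k) : 0 ≤ c.1 ∧ c.1 ≤ c.2 ∧ c.2 ≤ 1 := by
  induction d generalizing k with
  | zero => exact ⟨fun i => i.elim0, fun i => i.elim0, fun i => i.elim0⟩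
  | succ d ih =>
    obtain ⟨j, hj, b, hb, rfl⟩ := mem_stripBrackets_succ.1 hc
    obtain ⟨h_nonneg, h_le, h_le_one⟩ := ih hb
    have hjk : (j : ℝ) ≤ k := Nat.cast_le.2 hj
    refine ⟨Fin.le_cons.2 ⟨?_, h_nonneg⟩,
      (Fin.cons_le_cons (α := fun _ => ℝ)).2 ⟨?_, h_le⟩,
      (Fin.cons_le (α := fun _ => ℝ)).2 ⟨?_, h_le_one⟩⟩
    · exact div_nonneg j.cast_nonneg (by positivity)
    · gcongr
      linarith
    · exact (div_le_one₀ (by positivity)).2 (by linarith)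

lemma prod_sub_prod_le_of_mem_stripBrackets {d k : ℕ} {c : (Fin d → ℝ) × (Fin d → ℝ)}
    (hc : c ∈ stripBrackets d k) : ∏ i, c.2 i - ∏ i, c.1 i ≤ (d : ℝ) / (k + 1) := by
  induction d generalizing k with
  | zero => simp
  | succ d ih =>
    obtain ⟨j, -, b, hb, rfl⟩ := mem_stripBrackets_succ.1 hc
    obtain ⟨h_nonneg, h_le, h_le_one⟩ := bounds_of_mem_stripBrackets hb
    have h_prod : ∏ i, b.2 i ≤ 1 :=
      Finset.prod_le_one (fun i _ => (h_nonneg i).trans (h_le i)) fun i _ => h_le_one i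
    have h_damped : (j : ℝ) * (d / (j + 1)) ≤ d := by
      rw [mul_div_assoc', div_le_iff₀ (by positivity)]
      linarith [d.cast_nonneg (α := ℝ)]
    simp only [Fin.prod_univ_succ, Fin.cons_zero, Fin.cons_succ]
    calc ((j : ℝ) + 1) / (k + 1) * ∏ i, b.2 i - j / (k + 1) * ∏ i, b.1 i
        = (∏ i, b.2 i + j * (∏ i, b.2 i - ∏ i, b.1 i)) / (k + 1) := by ring
      _ ≤ (1 + j * (d / (j + 1))) / (k + 1) := by
        gcongr
        exact ih hb
      _ ≤ ((d + 1 : ℕ) : ℝ) / (k + 1) := by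
        gcongr
        push_cast
        linarith

lemma exists_nat_le_mem_Icc_div (k : ℕ) {x : ℝ} (hx : x ∈ Icc (0 : ℝ) 1) :
    ∃ j ≤ k, x ∈ Icc ((j : ℝ) / (k + 1)) (((j : ℝ) + 1) / (k + 1)) := by
  have hk : (0 : ℝ) < k + 1 := by positivity
  simp only [mem_Icc, div_le_iff₀ hk, le_div_iff₀ hk]
  rcases hx.2.lt_or_eq with hx1 | rfl
  · have h_nonneg : 0 ≤ x * (k + 1) := mul_nonneg hx.1 hk.le
    refine ⟨⌊x * (k + 1)⌋₊, Nat.lt_succ_iff.1 ((Nat.floor_lt h_nonneg).2 ?_),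
      Nat.floor_le h_nonneg, (Nat.lt_floor_add_one _).le⟩
    push_cast
    exact mul_lt_of_lt_one_left hk hx1
  · exact ⟨k, le_rfl, by linarith, by linarith⟩

lemma exists_mem_stripBrackets {d : ℕ} (k : ℕ) {t : Fin d → ℝ} (ht : t ∈ Icc 0 1) :
    ∃ c ∈ stripBrackets d k, t ∈ Icc c.1 c.2 := by
  induction d generalizing k with
  | zero =>
    exact ⟨(0, 0), Finset.mem_singleton_self _, fun i => i.elim0, fun i => i.elim0⟩
  | succ d ih =>
    obtain ⟨j, hj, h_lower, h_upper⟩ := exists_nat_le_mem_Icc_div k ⟨ht.1 0, ht.2 0⟩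
    obtain ⟨b, hb, hb_lower, hb_upper⟩ :=
      ih j (t := Fin.tail t) ⟨fun i => ht.1 i.succ, fun i => ht.2 i.succ⟩
    exact ⟨_, mem_stripBrackets_succ.2 ⟨j, hj, b, hb, rfl⟩,
      (Fin.cons_le (α := fun _ => ℝ)).2 ⟨h_lower, hb_lower⟩,
      Fin.le_cons.2 ⟨h_upper, hb_upper⟩⟩

/-- A `δ`-cover of the unit cube `[0,1]^d`: a finite set of points of the cube such that every `t`
lies between two of them, `x ≤ t ≤ y`, whose anchored boxes differ in volume by at most `δ`. -/
def IsDeltaCover_s1 {d : ℕ} (δ : ℝ) (E : Finset (Fin d → ℝ)) : Prop :=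
  (∀ x ∈ E, x ∈ Icc 0 1) ∧
    ∀ t ∈ Icc 0 1, ∃ x ∈ E, ∃ y ∈ E, t ∈ Icc x y ∧ ∏ i, y i - ∏ i, x i ≤ δ

lemma exists_isDeltaCover_card_le_choose (d k : ℕ) :
    ∃ E : Finset (Fin d → ℝ),
      IsDeltaCover_s1 ((d : ℝ) / (k + 1)) E ∧ E.card ≤ 2 * (k + d).choose d := by
  classical
  refine ⟨(stripBrackets d k).image Prod.fst ∪ (stripBrackets d k).image Prod.snd,
    ⟨fun x hx => ?_, fun t ht => ?_⟩, ?_⟩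
  · simp only [Finset.mem_union, Finset.mem_image] at hx
    rcases hx with ⟨c, hc, rfl⟩ | ⟨c, hc, rfl⟩ <;>
      obtain ⟨h_nonneg, h_le, h_le_one⟩ := bounds_of_mem_stripBrackets hc
    · exact ⟨h_nonneg, h_le.trans h_le_one⟩
    · exact ⟨h_nonneg.trans h_le, h_le_one⟩
  · obtain ⟨c, hc, htc⟩ := exists_mem_stripBrackets k ht
    exact ⟨c.1, Finset.mem_union_left _ (Finset.mem_image_of_mem _ hc),
      c.2, Finset.mem_union_right _ (Finset.mem_image_of_mem _ hc),
      htc, prod_sub_prod_le_of_mem_stripBrackets hc⟩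
  · calc _ ≤ (stripBrackets d k).card + (stripBrackets d k).card :=
          (Finset.card_union_le _ _).trans
            (add_le_add Finset.card_image_le Finset.card_image_le)
      _ = 2 * (stripBrackets d k).card := (two_mul _).symm
      _ ≤ 2 * (k + d).choose d := Nat.mul_le_mul_left 2 (card_stripBrackets_le d k)

lemma choose_floor_div_add_le (d : ℕ) {δ : ℝ} (hδ : 0 < δ) :
    ((⌊d / δ⌋₊ + d).choose d : ℝ) ≤ Real.exp 1 ^ d * (δ⁻¹ + 1) ^ d := by
  have h_floor : (⌊d / δ⌋₊ : ℝ) ≤ d / δ := Nat.floor_le (by positivity)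
  have h_exp : (d : ℝ) ^ d / d.factorial ≤ Real.exp 1 ^ d := by
    rw [← Real.exp_nat_mul, mul_one]
    exact Real.pow_div_factorial_le_exp _ d.cast_nonneg d
  calc ((⌊d / δ⌋₊ + d).choose d : ℝ)
      ≤ ((⌊d / δ⌋₊ + d : ℕ) : ℝ) ^ d / d.factorial := Nat.choose_le_pow_div d _
    _ ≤ (d / δ + d) ^ d / d.factorial := by
      push_cast
      gcongr
    _ = (d * (δ⁻¹ + 1)) ^ d / d.factorial := by ring
    _ = d ^ d / d.factorial * (δ⁻¹ + 1) ^ d := by rw [mul_pow, mul_div_right_comm]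
    _ ≤ Real.exp 1 ^ d * (δ⁻¹ + 1) ^ d := by gcongr

lemma exists_isDeltaCover_card_le {d : ℕ} (hd : 1 ≤ d) {δ : ℝ} (hδ : 0 < δ) :
    ∃ E : Finset (Fin d → ℝ), IsDeltaCover_s1 δ E ∧
      (E.card : ℝ) ≤ (2 * Real.exp 1) ^ d * (δ⁻¹ + 1) ^ d := by
  obtain ⟨E, ⟨hE_cube, hE_cover⟩, hE_card⟩ := exists_isDeltaCover_card_le_choose d ⌊d / δ⌋₊
  have h_gap : (d : ℝ) / (⌊d / δ⌋₊ + 1) ≤ δ :=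
    (div_le_comm₀ (by positivity) hδ).2 (Nat.lt_floor_add_one _).le
  refine ⟨E, ⟨hE_cube, fun t ht => ?_⟩, ?_⟩
  · obtain ⟨x, hx, y, hy, hxy, h_le⟩ := hE_cover t ht
    exact ⟨x, hx, y, hy, hxy, h_le.trans h_gap⟩
  · calc (E.card : ℝ) ≤ 2 * ((⌊d / δ⌋₊ + d).choose d : ℝ) := mod_cast hE_card
      _ ≤ 2 ^ d * (Real.exp 1 ^ d * (δ⁻¹ + 1) ^ d) := by
        gcongr
        · exact le_self_pow₀ one_le_two (Nat.one_le_iff_ne_zero.1 hd)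
        · exact choose_floor_div_add_le d hδ
      _ = (2 * Real.exp 1) ^ d * (δ⁻¹ + 1) ^ d := by rw [mul_pow, mul_assoc]

lemma lowerBox_eq_pi {d : ℕ} (t : Fin d → ℝ) : lowerBox t = univ.pi fun i => Ico 0 (t i) := by
  ext y
  simp only [lowerBox, mem_ofPred_eq, mem_univ_pi, mem_Ico]

lemma measurableSet_lowerBox {d : ℕ} (t : Fin d → ℝ) : MeasurableSet (lowerBox t) := by
  rw [lowerBox_eq_pi]
  exact MeasurableSet.univ_pi fun _ => measurableSet_Ico

lemma lowerBox_mono {d : ℕ} : Monotone (lowerBox (d := d)) :=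
  fun _ _ hxy _ hz i => ⟨(hz i).1, (hz i).2.trans_le (hxy i)⟩

lemma volume_lowerBox {d : ℕ} {t : Fin d → ℝ} (ht : 0 ≤ t) :
    volume (lowerBox t) = ENNReal.ofReal (∏ i, t i) := by
  simp only [lowerBox_eq_pi, volume_pi_pi, Real.volume_Ico, sub_zero,
    ENNReal.ofReal_prod_of_nonneg fun i _ => ht i]

lemma volume_lowerBox_diff {d : ℕ} {x y : Fin d → ℝ} (hx : 0 ≤ x) (hxy : x ≤ y) :
    volume (lowerBox y \ lowerBox x) = ENNReal.ofReal (∏ i, y i - ∏ i, x i) := by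
  rw [measure_sdiff (lowerBox_mono hxy) (measurableSet_lowerBox x).nullMeasurableSet
      (volume_lowerBox hx ▸ ENNReal.ofReal_ne_top),
    volume_lowerBox hx, volume_lowerBox (hx.trans hxy),
    ENNReal.ofReal_sub _ (Finset.prod_nonneg fun i _ => hx i)]

lemma measurableSet_graphRegion {d : ℕ} {ψ : (Fin d → ℝ) → ℝ} (hψ : Measurable ψ) (L : ℝ) :
    MeasurableSet (graphRegion ψ L) :=
  (measurable_fst measurableSet_Icc).inter <| (measurable_snd measurableSet_Icc).inter <|
    measurableSet_le (measurable_snd.const_mul L) (hψ.comp measurable_fst)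

lemma measure_lowerBox_prod_inter_diff_le {d : ℕ} {α : Type*} [MeasurableSpace α] {ν : Measure α}
    [SFinite ν] {S : Set α} (hS : ν S ≤ 1) (A : Set ((Fin d → ℝ) × α)) {x y : Fin d → ℝ}
    (hx : 0 ≤ x) (hxy : x ≤ y) :
    (volume.prod ν) ((lowerBox y ×ˢ S ∩ A) \ (lowerBox x ×ˢ S ∩ A)) ≤
      ENNReal.ofReal (∏ i, y i - ∏ i, x i) := by
  have h_sub : (lowerBox y ×ˢ S ∩ A) \ (lowerBox x ×ˢ S ∩ A) ⊆
      (lowerBox y \ lowerBox x) ×ˢ S :=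
    fun _ ⟨⟨⟨hzy, hzS⟩, hzA⟩, hzx⟩ => ⟨⟨hzy, fun h => hzx ⟨⟨h, hzS⟩, hzA⟩⟩, hzS⟩
  calc _ ≤ (volume.prod ν) ((lowerBox y \ lowerBox x) ×ˢ S) := measure_mono h_sub
    _ = volume (lowerBox y \ lowerBox x) * ν S := Measure.prod_prod _ _
    _ ≤ volume (lowerBox y \ lowerBox x) := mul_le_of_le_one_right' hS
    _ = ENNReal.ofReal (∏ i, y i - ∏ i, x i) := volume_lowerBox_diff hx hxy

theorem delta_cover_acceptance_rejection_general {d : ℕ} (hd : 1 ≤ d)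
    {α : Type*} [MeasurableSpace α] {ν : Measure α} [SFinite ν]
    {S : Set α} (hS : MeasurableSet S) (hνS : ν S ≤ 1)
    {A : Set ((Fin d → ℝ) × α)} (hA : MeasurableSet A) {δ : ℝ} (hδ : 0 < δ) :
    ∃ Γ : Finset (Set ((Fin d → ℝ) × α)),
      (∀ B ∈ Γ, MeasurableSet B ∧ B ⊆ A) ∧
      (Γ.card : ℝ) ≤ (2 * Real.exp 1) ^ d * (δ⁻¹ + 1) ^ d ∧
      ∀ t ∈ Icc (0 : Fin d → ℝ) 1, ∃ B₁ ∈ Γ, ∃ B₂ ∈ Γ,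
        B₁ ⊆ lowerBox t ×ˢ S ∩ A ∧ lowerBox t ×ˢ S ∩ A ⊆ B₂ ∧
          (volume.prod ν) (B₂ \ B₁) ≤ ENNReal.ofReal δ := by
  classical
  obtain ⟨E, ⟨hE_cube, hE_cover⟩, hE_card⟩ := exists_isDeltaCover_card_le hd hδ
  have h_mono : Monotone fun x : Fin d → ℝ => lowerBox x ×ˢ S ∩ A := fun _ _ hxy =>
    inter_subset_inter_left A (prod_mono_left (lowerBox_mono hxy))
  refine ⟨E.image fun x => lowerBox x ×ˢ S ∩ A,
    Finset.forall_mem_image.2 fun x _ =>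
      ⟨((measurableSet_lowerBox x).prod hS).inter hA, inter_subset_right⟩,
    (Nat.cast_le.2 Finset.card_image_le).trans hE_card, fun t ht => ?_⟩
  obtain ⟨x, hx, y, hy, ⟨hxt, hty⟩, h_gap⟩ := hE_cover t ht
  exact ⟨_, Finset.mem_image_of_mem _ hx, _, Finset.mem_image_of_mem _ hy,
    h_mono hxt, h_mono hty,
    (measure_lowerBox_prod_inter_diff_le hνS A (hE_cube x hx).1 (hxt.trans hty)).trans
      (ENNReal.ofReal_le_ofReal h_gap)⟩

/-- **δ-cover for the acceptance-rejection test sets** (Lemma 2 of the paper, with `s = d+1`):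
for any `δ > 0` there is a family `Γ_δ` of measurable subsets of `A` of cardinality at most
`(2e)^{s-1}(δ⁻¹+1)^{s-1}` such that every `J_t*` is sandwiched `B₁ ⊆ J_t* ⊆ B₂` between two
members of `Γ_δ` with `λ(B₂ \ B₁) ≤ δ`. -/
theorem delta_cover_acceptance_rejection (d : ℕ) (hd : 1 ≤ d)
    (L : ℝ) (hL : 0 < L) (ψ : (Fin d → ℝ) → ℝ) (hmeas : Measurable ψ)
    (hψ0 : ∀ z ∈ Icc (0 : Fin d → ℝ) 1, 0 ≤ ψ z)
    (hψL : ∀ z ∈ Icc (0 : Fin d → ℝ) 1, ψ z ≤ L)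
    (δ : ℝ) (hδ : 0 < δ) :
    ∃ Γ : Finset (Set ((Fin d → ℝ) × ℝ)),
      (∀ B ∈ Γ, MeasurableSet B ∧ B ⊆ graphRegion ψ L) ∧
      (Γ.card : ℝ) ≤ (2 * Real.exp 1) ^ d * (δ⁻¹ + 1) ^ d ∧
      ∀ t ∈ Icc (0 : Fin d → ℝ) 1, ∃ B₁ ∈ Γ, ∃ B₂ ∈ Γ,
        B₁ ⊆ Jstar ψ L t ∧ Jstar ψ L t ⊆ B₂ ∧ volume (B₂ \ B₁) ≤ ENNReal.ofReal δ :=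
  delta_cover_acceptance_rejection_general hd measurableSet_Icc (by simp)
    (measurableSet_graphRegion hmeas L) hδ
end

section
/- Let s ≥ 2 and let A ⊆ [0,1]^s be a measurable set whose boundary ∂A admits an (s−1)-dimensional Minkowski content M_A ∈ (0,∞). For m ∈ ℕ partition [0,1)^s into the M = m^s cubes Q_c = ∏_{j=1}^s [c_j/m,(c_j+1)/m), c ∈ {0,…,m−1}^s. Then there exists m_0 ∈ ℕ such that for all m ≥ m_0 and every point set P = {x_c : c ∈ {0,…,m−1}^s} ⊆ [0,1)^s containing exactly one point x_c in each cube Q_c, the number N of points of P lying in A satisfies M(λ(A) − 3 s^{1/2} M_A M^{−1/s}) ≤ N ≤ M(λ(A) + 3 s^{1/2} M_A M^{−1/s}), i.e. |N − m^s λ(A)| ≤ 3 s^{1/2} M_A m^{s−1}. -/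
open MeasureTheory Set Filter

/-- The closed Euclidean `ε`-neighborhood of a set `E ⊆ ℝ^s`. -/
def euclNbhd {s : ℕ} (E : Set (Fin s → ℝ)) (ε : ℝ) : Set (Fin s → ℝ) :=
  {x | ∃ y ∈ E, Real.sqrt (∑ i, (x i - y i) ^ 2) ≤ ε}

/-- `∂A` admits the `(s-1)`-dimensional Minkowski content `M`. -/
def HasMinkowskiContent {s : ℕ} (A : Set (Fin s → ℝ)) (M : ℝ) : Prop :=
  Tendsto (fun ε : ℝ => (volume (euclNbhd (frontier A) ε)).toReal / (2 * ε))
    (nhdsWithin 0 (Set.Ioi 0)) (nhds M)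

/-- The grid cube `Q_c = ∏_j [c_j/m, (c_j+1)/m)`. -/
def gridCube {s m : ℕ} (c : Fin s → Fin m) : Set (Fin s → ℝ) :=
  {x | ∀ i, (c i : ℝ) / m ≤ x i ∧ x i < ((c i : ℝ) + 1) / m}

/-!
Let `B` be the union of the grid cubes whose sample point lies in `A`; it has volume `N / m ^ s`.
Inside the unit cube, `A` and `B` differ only in grid cubes that meet both `A` and its complement.
Such a cube is connected, hence contains a point of `∂A`, and since its diameter is `√s / m` it lies
in the `√s / m`-neighborhood of `∂A`. Therefore `|N / m ^ s - λ(A)|` is at most the volume of that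
neighborhood, which is `2 (√s / m) M_A (1 + o(1))`. Any constant larger than `2 √s M_A` thus works.
-/

open scoped symmDiff

theorem inter_frontier_nonempty_of_isPreconnected {X : Type*} [TopologicalSpace X] {Q A : Set X}
    (hQ : IsPreconnected Q) (hA : (Q ∩ A).Nonempty) (hAc : (Q ∩ Aᶜ).Nonempty) :
    (Q ∩ frontier A).Nonempty := by
  have := Subtype.preconnectedSpace hQ
  obtain ⟨p, hpQ, hpA⟩ := hA
  obtain ⟨q, hqQ, hqA⟩ := hAc
  have hne : (frontier ((↑) ⁻¹' A : Set Q)).Nonempty :=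
    nonempty_frontier_iff.2 ⟨⟨⟨p, hpQ⟩, hpA⟩, (ne_univ_iff_exists_notMem _).2 ⟨⟨q, hqQ⟩, hqA⟩⟩
  obtain ⟨y, hy⟩ := hne
  exact ⟨y, y.2, continuous_subtype_val.frontier_preimage_subset A hy⟩

theorem abs_measureReal_sub_le_of_symmDiff_subset {α : Type*} [MeasurableSpace α] {μ : Measure α}
    {S T E : Set α} (hE : S ∆ T ⊆ E) (hSfin : μ S ≠ ⊤) (hTfin : μ T ≠ ⊤) (hEfin : μ E ≠ ⊤) :
    |μ.real S - μ.real T| ≤ μ.real E := by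
  have hST : μ.real S ≤ μ.real T + μ.real E :=
    (measureReal_mono (fun z hz ↦ or_iff_not_imp_left.2 fun hzT ↦ hE (.inl ⟨hz, hzT⟩))
      (measure_union_ne_top hTfin hEfin)).trans (measureReal_union_le T E)
  have hTS : μ.real T ≤ μ.real S + μ.real E :=
    (measureReal_mono (fun z hz ↦ or_iff_not_imp_left.2 fun hzS ↦ hE (.inr ⟨hz, hzS⟩))
      (measure_union_ne_top hSfin hEfin)).trans (measureReal_union_le S E)
  exact abs_sub_le_iff.2 ⟨by linarith, by linarith⟩

section EuclideanNeighborhood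

variable {s : ℕ}

theorem euclNbhd_subset_cthickening (E : Set (Fin s → ℝ)) {ε : ℝ} (hε : 0 ≤ ε) :
    euclNbhd E ε ⊆ Metric.cthickening ε E := by
  rintro x ⟨y, hyE, hxy⟩
  refine Metric.mem_cthickening_of_dist_le x y ε E hyE ((dist_pi_le_iff hε).2 fun i ↦ ?_)
  calc dist (x i) (y i) = Real.sqrt ((x i - y i) ^ 2) := by rw [Real.dist_eq, Real.sqrt_sq_eq_abs]
    _ ≤ Real.sqrt (∑ j, (x j - y j) ^ 2) :=
      Real.sqrt_le_sqrt (Finset.single_le_sum (f := fun j ↦ (x j - y j) ^ 2)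
        (fun j _ ↦ sq_nonneg _) (Finset.mem_univ i))
    _ ≤ ε := hxy

theorem isBounded_euclNbhd {E : Set (Fin s → ℝ)} (hE : Bornology.IsBounded E) {ε : ℝ}
    (hε : 0 ≤ ε) : Bornology.IsBounded (euclNbhd E ε) :=
  hE.cthickening.subset (euclNbhd_subset_cthickening E hε)

theorem HasMinkowskiContent.eventually_volume_real_euclNbhd_le {A : Set (Fin s → ℝ)} {M δ κ : ℝ}
    (hM : HasMinkowskiContent A M) (hδ : 0 < δ) (hκ : 2 * δ * M < κ) :
    ∀ᶠ m : ℕ in atTop, volume.real (euclNbhd (frontier A) (δ / m)) ≤ κ / m := by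
  have hscale : Tendsto (fun m : ℕ ↦ δ / (m : ℝ)) atTop (nhdsWithin 0 (Ioi 0)) := by
    refine tendsto_nhdsWithin_iff.2 ⟨tendsto_const_div_atTop_nhds_zero_nat δ, ?_⟩
    filter_upwards [eventually_gt_atTop 0] with m hm
    exact div_pos hδ (Nat.cast_pos.2 hm)
  have hlim : M < κ / (2 * δ) := by
    rwa [lt_div_iff₀ (by positivity), mul_comm]
  filter_upwards [(hM.comp hscale).eventually_lt_const hlim, eventually_gt_atTop 0] with m hlt hm
  have : (0 : ℝ) < m := Nat.cast_pos.2 hm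
  have hvol := (div_lt_iff₀ (by positivity)).1 hlt
  calc volume.real (euclNbhd (frontier A) (δ / m)) ≤ κ / (2 * δ) * (2 * (δ / m)) := hvol.le
    _ = κ / m := by field_simp

end EuclideanNeighborhood

section GridCube

variable {s m : ℕ}

theorem gridCube_eq_pi (c : Fin s → Fin m) :
    gridCube c = univ.pi fun i ↦ Ico ((c i : ℝ) / m) (((c i : ℝ) + 1) / m) := by
  ext x
  simp only [gridCube, mem_ofPred_eq, mem_univ_pi, mem_Ico]

theorem measurableSet_gridCube (c : Fin s → Fin m) : MeasurableSet (gridCube c) := by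
  rw [gridCube_eq_pi]
  exact .univ_pi fun _ ↦ measurableSet_Ico

theorem convex_gridCube (c : Fin s → Fin m) : Convex ℝ (gridCube c) := by
  rw [gridCube_eq_pi]
  exact convex_pi fun _ _ ↦ convex_Ico _ _

theorem volume_gridCube (c : Fin s → Fin m) :
    volume (gridCube c) = ENNReal.ofReal (1 / (m : ℝ) ^ s) := by
  have hside (i : Fin s) : ((c i : ℝ) + 1) / m - (c i : ℝ) / m = 1 / m := by ring
  simp only [gridCube_eq_pi, Real.volume_pi_Ico, hside, Finset.prod_const, Finset.card_univ,
    Fintype.card_fin]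
  rw [← ENNReal.ofReal_pow (by positivity), one_div_pow]

theorem floor_mul_of_mem_gridCube {c : Fin s → Fin m} {x : Fin s → ℝ} (hx : x ∈ gridCube c)
    (i : Fin s) : ⌊(m : ℝ) * x i⌋₊ = c i := by
  have hm : (0 : ℝ) < m := Nat.cast_pos.2 (c i).pos
  have hlo : (c i : ℝ) ≤ m * x i := (div_le_iff₀' hm).1 (hx i).1
  have hhi : m * x i < (c i : ℝ) + 1 := (lt_div_iff₀' hm).1 (hx i).2
  exact (Nat.floor_eq_iff ((Nat.cast_nonneg _).trans hlo)).2 ⟨hlo, hhi⟩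

theorem pairwise_disjoint_gridCube :
    Pairwise fun c d : Fin s → Fin m ↦ Disjoint (gridCube c) (gridCube d) := by
  refine fun c d hcd ↦ disjoint_left.2 fun x hxc hxd ↦ hcd (funext fun i ↦ Fin.ext ?_)
  rw [← floor_mul_of_mem_gridCube hxc i, floor_mul_of_mem_gridCube hxd i]

theorem pi_Ico_subset_iUnion_gridCube (hm : 0 < m) :
    (univ.pi fun _ : Fin s ↦ Ico (0 : ℝ) 1) ⊆ ⋃ c : Fin s → Fin m, gridCube c := by
  intro x hx
  rw [mem_univ_pi] at hx
  have hm' : (0 : ℝ) < m := Nat.cast_pos.2 hm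
  have hnonneg (i : Fin s) : 0 ≤ (m : ℝ) * x i := mul_nonneg hm'.le (hx i).1
  have hfloor (i : Fin s) : ⌊(m : ℝ) * x i⌋₊ < m :=
    (Nat.floor_lt (hnonneg i)).2 (mul_lt_of_lt_one_right hm' (hx i).2)
  exact mem_iUnion.2 ⟨fun i ↦ ⟨_, hfloor i⟩, fun i ↦
    ⟨(div_le_iff₀' hm').2 (Nat.floor_le (hnonneg i)),
      (lt_div_iff₀' hm').2 (Nat.lt_floor_add_one _)⟩⟩

theorem gridCube_subset_pi_Ico (c : Fin s → Fin m) :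
    gridCube c ⊆ univ.pi fun _ : Fin s ↦ Ico (0 : ℝ) 1 := by
  refine fun x hx i _ ↦ ⟨(by positivity : (0 : ℝ) ≤ (c i : ℝ) / m).trans (hx i).1,
    (hx i).2.trans_le (div_le_one_of_le₀ ?_ (Nat.cast_nonneg m))⟩
  exact_mod_cast (c i).isLt

theorem sqrt_sum_sq_sub_le_of_mem_gridCube {c : Fin s → Fin m} {x y : Fin s → ℝ}
    (hx : x ∈ gridCube c) (hy : y ∈ gridCube c) :
    Real.sqrt (∑ i, (x i - y i) ^ 2) ≤ Real.sqrt s / m := by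
  have hcoord (i : Fin s) : (x i - y i) ^ 2 ≤ (1 / (m : ℝ)) ^ 2 := by
    have hxi := hx i
    have hyi := hy i
    rw [add_div] at hxi hyi
    exact sq_le_sq' (by linarith) (by linarith)
  refine Real.sqrt_le_iff.2 ⟨by positivity, ?_⟩
  calc ∑ i, (x i - y i) ^ 2 ≤ ∑ _i : Fin s, (1 / (m : ℝ)) ^ 2 :=
        Finset.sum_le_sum fun i _ ↦ hcoord i
    _ = (Real.sqrt s / m) ^ 2 := by
        rw [Finset.sum_const, Finset.card_univ, Fintype.card_fin, nsmul_eq_mul, div_pow, div_pow,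
          Real.sq_sqrt (Nat.cast_nonneg s)]
        ring

theorem gridCube_subset_euclNbhd_frontier {c : Fin s → Fin m} {A : Set (Fin s → ℝ)}
    (hA : (gridCube c ∩ A).Nonempty) (hAc : (gridCube c ∩ Aᶜ).Nonempty) :
    gridCube c ⊆ euclNbhd (frontier A) (Real.sqrt s / m) := by
  obtain ⟨y, hyQ, hy⟩ :=
    inter_frontier_nonempty_of_isPreconnected (convex_gridCube c).isPreconnected hA hAc
  exact fun x hx ↦ ⟨y, hy, sqrt_sum_sq_sub_le_of_mem_gridCube hx hyQ⟩

end GridCube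

section AcceptedCubes

variable {s m : ℕ} {x : (Fin s → Fin m) → Fin s → ℝ}

/-- The union of the grid cubes whose sample point `x c` is accepted, i.e. lies in `A`: the
approximation of `A` that the sample points determine. -/
def acceptedCubes (A : Set (Fin s → ℝ)) (x : (Fin s → Fin m) → Fin s → ℝ) : Set (Fin s → ℝ) :=
  ⋃ c : {c // x c ∈ A}, gridCube c.1

theorem acceptedCubes_subset_pi_Ico (A : Set (Fin s → ℝ)) (x : (Fin s → Fin m) → Fin s → ℝ) :
    acceptedCubes A x ⊆ univ.pi fun _ ↦ Ico 0 1 :=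
  iUnion_subset fun c ↦ gridCube_subset_pi_Ico c.1

theorem volume_real_acceptedCubes (A : Set (Fin s → ℝ)) (x : (Fin s → Fin m) → Fin s → ℝ) :
    volume.real (acceptedCubes A x) = Nat.card {c // x c ∈ A} / (m : ℝ) ^ s := by
  classical
  have hcube (c : Fin s → Fin m) : volume.real (gridCube c) = 1 / (m : ℝ) ^ s := by
    rw [measureReal_def, volume_gridCube, ENNReal.toReal_ofReal (by positivity)]
  rw [acceptedCubes, measureReal_iUnion_fintype
    (pairwise_disjoint_gridCube.comp_of_injective Subtype.val_injective)
    (fun c ↦ measurableSet_gridCube c.1) (fun c ↦ by simp [volume_gridCube])]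
  simp only [hcube, Finset.sum_const, Finset.card_univ, nsmul_eq_mul, mul_one_div,
    Nat.card_eq_fintype_card]

theorem acceptedCubes_symmDiff_subset (hm : 0 < m) (hx : ∀ c, x c ∈ gridCube c)
    (A : Set (Fin s → ℝ)) :
    acceptedCubes A x ∆ (A ∩ univ.pi fun _ ↦ Ico 0 1) ⊆
      euclNbhd (frontier A) (Real.sqrt s / m) := by
  rintro z (⟨hz, hzA⟩ | ⟨⟨hzA, hz⟩, hz'⟩)
  · obtain ⟨c, hzc⟩ := mem_iUnion.1 hz
    exact gridCube_subset_euclNbhd_frontier ⟨x c, hx c, c.2⟩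
      ⟨z, hzc, fun h ↦ hzA ⟨h, acceptedCubes_subset_pi_Ico A x hz⟩⟩ hzc
  · obtain ⟨c, hzc⟩ := mem_iUnion.1 (pi_Ico_subset_iUnion_gridCube hm hz)
    exact gridCube_subset_euclNbhd_frontier ⟨z, hzc, hzA⟩
      ⟨x c, hx c, fun h ↦ hz' (mem_iUnion.2 ⟨⟨c, h⟩, hzc⟩)⟩ hzc

theorem abs_card_div_sub_volume_real_le (hm : 0 < m) (hx : ∀ c, x c ∈ gridCube c)
    {A : Set (Fin s → ℝ)} (hA : Bornology.IsBounded (frontier A)) :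
    |Nat.card {c // x c ∈ A} / (m : ℝ) ^ s - volume.real (A ∩ Icc 0 1)| ≤
      volume.real (euclNbhd (frontier A) (Real.sqrt s / m)) := by
  have hcube : (A ∩ univ.pi fun _ ↦ Ico 0 1 : Set (Fin s → ℝ)) =ᵐ[volume] (A ∩ Icc 0 1 : Set _) :=
    (ae_eq_refl A).inter Measure.univ_pi_Ico_ae_eq_Icc
  have hbdd : Bornology.IsBounded (univ.pi fun _ : Fin s ↦ Ico (0 : ℝ) 1) :=
    .pi fun _ ↦ Metric.isBounded_Ico 0 1
  rw [← volume_real_acceptedCubes A x, ← measureReal_congr hcube]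
  refine abs_measureReal_sub_le_of_symmDiff_subset (acceptedCubes_symmDiff_subset hm hx A) ?_ ?_ ?_
  · exact (hbdd.subset (acceptedCubes_subset_pi_Ico A x)).measure_lt_top.ne
  · exact (hbdd.subset inter_subset_right).measure_lt_top.ne
  · exact (isBounded_euclNbhd hA (by positivity)).measure_lt_top.ne

end AcceptedCubes

theorem accepted_points_bound_general {s : ℕ} (hs : 0 < s) {A : Set (Fin s → ℝ)}
    (hA : Bornology.IsBounded (frontier A)) {MA κ : ℝ} (hMink : HasMinkowskiContent A MA)
    (hκ : 2 * Real.sqrt s * MA < κ) :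
    ∀ᶠ m : ℕ in atTop, ∀ x : (Fin s → Fin m) → (Fin s → ℝ), (∀ c, x c ∈ gridCube c) →
      |(Nat.card {c : Fin s → Fin m // x c ∈ A} : ℝ) -
        (m : ℝ) ^ s * (volume (A ∩ Icc 0 1)).toReal| ≤ κ * (m : ℝ) ^ (s - 1) := by
  have hsqrt : 0 < Real.sqrt s := Real.sqrt_pos.2 (Nat.cast_pos.2 hs)
  filter_upwards [hMink.eventually_volume_real_euclNbhd_le hsqrt hκ, eventually_gt_atTop 0]
    with m hvol hm x hx
  have hm' : (0 : ℝ) < m := Nat.cast_pos.2 hm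
  have hms : (0 : ℝ) < (m : ℝ) ^ s := pow_pos hm' s
  calc _ = |(m : ℝ) ^ s *
        (Nat.card {c // x c ∈ A} / (m : ℝ) ^ s - volume.real (A ∩ Icc 0 1))| := by
        rw [mul_sub, mul_div_cancel₀ _ hms.ne', measureReal_def]
    _ = (m : ℝ) ^ s *
        |Nat.card {c // x c ∈ A} / (m : ℝ) ^ s - volume.real (A ∩ Icc 0 1)| := by
        rw [abs_mul, abs_of_pos hms]
    _ ≤ (m : ℝ) ^ s * (κ / m) := by
        gcongr
        exact (abs_card_div_sub_volume_real_le hm hx hA).trans hvol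
    _ = κ * (m : ℝ) ^ (s - 1) := by
        rw [← pow_sub_one_mul hs.ne' (m : ℝ)]
        field_simp

/-- **Bound on the number of accepted points** (Lemma 4 of the paper): for every stratified
point set (one point `x_c` in each of the `M = m^s` grid cubes), the number `N` of points
lying in `A` satisfies `|N - m^s λ(A)| ≤ 3 √s M_A m^{s-1}`, i.e.
`M(λ(A) - 3√s M_A M^{-1/s}) ≤ N ≤ M(λ(A) + 3√s M_A M^{-1/s})`, provided `m` is large. -/
theorem accepted_points_bound (s : ℕ) (hs : 2 ≤ s) (A : Set (Fin s → ℝ))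
    (hA : A ⊆ Icc (0 : Fin s → ℝ) 1) (hAmeas : MeasurableSet A)
    (MA : ℝ) (hMApos : 0 < MA) (hMink : HasMinkowskiContent A MA) :
    ∃ m₀ : ℕ, ∀ m : ℕ, m₀ ≤ m →
      ∀ x : (Fin s → Fin m) → (Fin s → ℝ), (∀ c, x c ∈ gridCube c) →
        |(Nat.card {c : Fin s → Fin m // x c ∈ A} : ℝ) - (m : ℝ) ^ s * (volume A).toReal|
          ≤ 3 * Real.sqrt s * MA * (m : ℝ) ^ (s - 1) := by
  have hbdd := ((Metric.isBounded_Icc 0 1).subset hA).closure.subset frontier_subset_closure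
  have hsqrt : 0 < Real.sqrt s := Real.sqrt_pos.2 (Nat.cast_pos.2 (by lia))
  have hκ : 2 * Real.sqrt s * MA < 3 * Real.sqrt s * MA := by linarith [mul_pos hsqrt hMApos]
  simpa only [inter_eq_left.2 hA] using eventually_atTop.1
    (accepted_points_bound_general (by lia) hbdd hMink hκ)
end
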